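/- Let N be a positive integer, F_N the normalized discrete Fourier transform of size N, and for α ∈ ℝ define F_{N,α} := a₀(α)·I_N + a₁(α)·F_N + a₂(α)·F_N² + a₃(α)·F_N³, where a₀(α) = (1/2)(1 + e^{iα})·cos α, a₁(α) = (1/2)(1 − i·e^{iα})·sin α, a₂(α) = (1/2)(−1 + e^{iα})·cos α, a₃(α) = (1/2)(−1 − i·e^{iα})·sin α. Then the one-parameter family satisfies the group law F_{N,α}·F_{N,β} = F_{N,α+β} for all α, β ∈ ℝ. -/

import Mathlib

/-- The normalized discrete Fourier transform of size `N`. -/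
noncomputable def dft (N : ℕ) : Matrix (Fin N) (Fin N) ℂ :=
  Matrix.of fun k l : Fin N =>
    ((1 / Real.sqrt N : ℝ) : ℂ) *
      Complex.exp (2 * Real.pi * Complex.I * ((k.1 * l.1 : ℕ) : ℂ) / N)

noncomputable def a0 (α : ℝ) : ℂ :=
  (1 / 2) * (1 + Complex.exp (α * Complex.I)) * Real.cos α

noncomputable def a1 (α : ℝ) : ℂ :=
  (1 / 2) * (1 - Complex.I * Complex.exp (α * Complex.I)) * Real.sin α

noncomputable def a2 (α : ℝ) : ℂ :=
  (1 / 2) * (-1 + Complex.exp (α * Complex.I)) * Real.cos α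

noncomputable def a3 (α : ℝ) : ℂ :=
  (1 / 2) * (-1 - Complex.I * Complex.exp (α * Complex.I)) * Real.sin α

/-- The fractional Fourier transform
`F_{N,α} = a₀(α)·I_N + a₁(α)·F_N + a₂(α)·F_N² + a₃(α)·F_N³`. -/
noncomputable def fracDFT (N : ℕ) (α : ℝ) : Matrix (Fin N) (Fin N) ℂ :=
  a0 α • (1 : Matrix (Fin N) (Fin N) ℂ) + a1 α • dft N + a2 α • dft N ^ 2 +
    a3 α • dft N ^ 3

theorem dft_apply (N : ℕ) (k l : Fin N) :
    dft N k l = ((1 / Real.sqrt N : ℝ) : ℂ) *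
      Complex.exp (2 * Real.pi * Complex.I / N) ^ (k.1 * l.1) := by
  rw [← Complex.exp_nat_mul]
  simp only [dft, Matrix.of_apply]
  congr 2
  ring

theorem dft_sq_apply (N : ℕ) (hN : 0 < N) (k l : Fin N) :
    (dft N ^ 2) k l = if N ∣ k.1 + l.1 then 1 else 0 := by
  have hp := Complex.isPrimitiveRoot_exp N hN.ne'
  have hN' : (N : ℂ) ≠ 0 := by exact_mod_cast hN.ne'
  have hs : ((1 / Real.sqrt N : ℝ) : ℂ) * ((1 / Real.sqrt N : ℝ) : ℂ) = 1 / (N : ℂ) := by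
    rw [← Complex.ofReal_mul, div_mul_div_comm, Real.mul_self_sqrt (Nat.cast_nonneg N)]
    simp
  rw [pow_two, Matrix.mul_apply]
  simp only [dft_apply]
  generalize Complex.exp (2 * Real.pi * Complex.I / N) = z at hp
  have h1 : ∀ j : Fin N, ((1 / Real.sqrt N : ℝ) : ℂ) * z ^ (k.1 * j.1) *
      (((1 / Real.sqrt N : ℝ) : ℂ) * z ^ (j.1 * l.1)) =
      1 / (N : ℂ) * (z ^ (k.1 + l.1)) ^ j.1 := by
    intro j
    rw [← hs, ← pow_mul, add_mul, pow_add, mul_comm j.1 l.1]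
    ring
  rw [Finset.sum_congr rfl (fun j _ => h1 j), ← Finset.mul_sum,
    Fin.sum_univ_eq_sum_range (fun j => (z ^ (k.1 + l.1)) ^ j) N]
  split_ifs with h
  · rw [(hp.pow_eq_one_iff_dvd _).2 h]
    simp [hN']
  · have hne : z ^ (k.1 + l.1) ≠ 1 := fun hh => h ((hp.pow_eq_one_iff_dvd _).1 hh)
    rw [geom_sum_eq hne, ← pow_mul, mul_comm (k.1 + l.1) N, pow_mul, hp.pow_eq_one]
    simp

theorem dft_pow_four (N : ℕ) (hN : 0 < N) : dft N ^ 4 = 1 := by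
  have : dft N ^ 4 = dft N ^ 2 * dft N ^ 2 := by rw [← pow_add]
  rw [this]
  ext k m
  rw [Matrix.mul_apply]
  simp only [dft_sq_apply N hN]
  have hmod : (N - k.1) % N < N := Nat.mod_lt _ hN
  have hk : N ∣ k.1 + (N - k.1) % N := by
    apply Nat.dvd_of_mod_eq_zero
    rw [Nat.add_mod_mod, Nat.add_sub_cancel' k.2.le, Nat.mod_self]
  have huniq : ∀ (a b c : Fin N), N ∣ a.1 + b.1 → N ∣ a.1 + c.1 → b = c := by
    intro a b c h1 h2
    have h3 : a.1 + b.1 ≡ a.1 + c.1 [MOD N] :=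
      ((Nat.modEq_zero_iff_dvd).2 h1).trans ((Nat.modEq_zero_iff_dvd).2 h2).symm
    have h4 := Nat.ModEq.add_left_cancel' a.1 h3
    exact Fin.ext (Nat.ModEq.eq_of_lt_of_lt h4 b.2 c.2)
  rw [Finset.sum_eq_single (⟨(N - k.1) % N, hmod⟩ : Fin N)]
  · simp only [hk, if_true, one_mul, Matrix.one_apply]
    congr 1
    apply propext
    constructor
    · intro h
      exact huniq ⟨(N - k.1) % N, hmod⟩ k m (by rw [add_comm]; exact hk) h
    · rintro rfl
      rw [add_comm]; exact hk
  · intro b _ hb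
    rw [if_neg, zero_mul]
    intro h
    exact hb (huniq k b _ h hk)
  · simp

theorem fracDFT_mul_aux {R : Type*} [Ring R] [Algebra ℂ R] (F : R) (hF : F ^ 4 = 1)
    (a b c d ab bb cb db : ℂ) :
    (a • (1 : R) + b • F + c • F ^ 2 + d • F ^ 3) *
      (ab • (1 : R) + bb • F + cb • F ^ 2 + db • F ^ 3) =
    (a * ab + b * db + c * cb + d * bb) • (1 : R) +
    (a * bb + b * ab + c * db + d * cb) • F +
    (a * cb + b * bb + c * ab + d * db) • F ^ 2 +
    (a * db + b * cb + c * bb + d * ab) • F ^ 3 := by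
  have h5 : F ^ 5 = F := by rw [pow_succ, hF, one_mul]
  have h6 : F ^ 6 = F ^ 2 := by rw [show 6 = 4 + 2 from rfl, pow_add, hF, one_mul]
  have e11 : F * F = F ^ 2 := (pow_two F).symm
  have e12 : F * F ^ 2 = F ^ 3 := (pow_succ' F 2).symm
  have e13 : F * F ^ 3 = 1 := by rw [← pow_succ', hF]
  have e21 : F ^ 2 * F = F ^ 3 := (pow_succ F 2).symm
  have e31 : F ^ 3 * F = 1 := by rw [← pow_succ, hF]
  have e22 : F ^ 2 * F ^ 2 = 1 := by rw [← pow_add, hF]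
  have e23 : F ^ 2 * F ^ 3 = F := by rw [← pow_add, h5]
  have e32 : F ^ 3 * F ^ 2 = F := by rw [← pow_add, h5]
  have e33 : F ^ 3 * F ^ 3 = F ^ 2 := by rw [← pow_add, h6]
  simp only [add_mul, mul_add, smul_mul_smul_comm, one_mul, mul_one,
    e11, e12, e13, e21, e22, e23, e31, e32, e33]
  module

theorem stmt_17 (N : ℕ) (hN : 0 < N) (α β : ℝ) :
    fracDFT N α * fracDFT N β = fracDFT N (α + β) := by
  unfold fracDFT
  rw [fracDFT_mul_aux (dft N) (dft_pow_four N hN)]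
  have hI := Complex.I_sq
  have hα : (Real.sin α : ℂ) ^ 2 + (Real.cos α : ℂ) ^ 2 = 1 := by
    exact_mod_cast Real.sin_sq_add_cos_sq α
  have hβ : (Real.sin β : ℂ) ^ 2 + (Real.cos β : ℂ) ^ 2 = 1 := by
    exact_mod_cast Real.sin_sq_add_cos_sq β
  simp only [a0, a1, a2, a3, Real.cos_add, Real.sin_add, Complex.exp_mul_I,
    ← Complex.ofReal_cos, ← Complex.ofReal_sin]
  simp only [Complex.ofReal_add, Complex.ofReal_mul, Complex.ofReal_sub]
  generalize (Real.sin α : ℂ) = s at *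
  generalize (Real.cos α : ℂ) = c at *
  generalize (Real.sin β : ℂ) = t at *
  generalize (Real.cos β : ℂ) = d at *
  generalize Complex.I = i at *
  congr 1
  · congr 1
    · congr 1
      · congr 1
        grind
      · congr 1
        grind
    · congr 1
      grind
  · congr 1
    grind
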